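/- For all integers m, n ≥ 1, setting N = m + n, there exists a sign assignment on the set F' of rectangles of the toroidal grid of size N with both endpoint generators in Σ, and any two sign assignments on F' are gauge equivalent. -/

import Mathlib

/-- A rectangle `r(σ, i, j)` on the toroidal grid of size `N`: a flow from the
generator `σ` to the generator `σ^{ij}`. -/
structure GridRect (N : ℕ) where
  perm : Equiv.Perm (Fin N)
  i : Fin N
  j : Fin N
  hij : i ≠ j

namespace GridRect

variable {N : ℕ}

/-- The ending generator `σ^{ij}` of the rectangle `r(σ, i, j)`. -/
def endPerm (r : GridRect N) : Equiv.Perm (Fin N) :=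
  (Equiv.swap r.i r.j).trans r.perm

/-- The domain of the rectangle `r(σ,i,j)`: the indicator function of `C × R` where `C`
is the cyclic interval of columns from `i` to `j` and `R` is the cyclic interval of rows
from `σ(i)` to `σ(j)`. -/
def dom (r : GridRect N) (p : Fin N × Fin N) : ℕ :=
  if (p.1 - r.i < r.j - r.i) ∧ (p.2 - r.perm r.i < r.perm r.j - r.perm r.i) then 1 else 0

end GridRect

/-- The pairs `(r1, r2)` and `(r3, r4)` form a square: they are distinct ordered pairs,
`r1 : x → y`, `r2 : y → z`, `r3 : x → y'`, `r4 : y' → z` with `z ≠ x`, and the domains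
satisfy `D(r1) + D(r2) = D(r3) + D(r4)` pointwise. -/
def IsSquareOf {N : ℕ} (r1 r2 r3 r4 : GridRect N) : Prop :=
  (r1, r2) ≠ (r3, r4) ∧
  r3.perm = r1.perm ∧
  r2.perm = r1.endPerm ∧
  r4.perm = r3.endPerm ∧
  r4.endPerm = r2.endPerm ∧
  r2.endPerm ≠ r1.perm ∧
  ∀ p : Fin N × Fin N, r1.dom p + r2.dom p = r3.dom p + r4.dom p

/-- The set `Σ` of generators `σ` (0-indexed: columns/rows `0,…,m+n−1`) with
`σ(j) ∈ {0,…,m}` for `j < m` and `σ(j) ∈ {m−1,…,m+n−1}` for `j ≥ m`. -/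
def GenSet (m n : ℕ) : Set (Equiv.Perm (Fin (m + n))) :=
  {σ | ∀ j : Fin (m + n), ((j : ℕ) < m → (σ j : ℕ) ≤ m) ∧ (m ≤ (j : ℕ) → m ≤ (σ j : ℕ) + 1)}

/-- The set `F'` of rectangles with both endpoint generators in `Σ`. -/
def FSet (m n : ℕ) : Set (GridRect (m + n)) :=
  {r | r.perm ∈ GenSet m n ∧ r.endPerm ∈ GenSet m n}

/-- The rectangle `r(σ^{ij}, j, i)`, forming an α-degeneration with `r(σ,i,j)`. -/
def revRect {N : ℕ} (r : GridRect N) : GridRect N := ⟨r.endPerm, r.j, r.i, r.hij.symm⟩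

/-- The rectangle `r(σ^{ij}, i, j)`, forming a β-degeneration with `r(σ,i,j)`. -/
def sameRect {N : ℕ} (r : GridRect N) : GridRect N := ⟨r.endPerm, r.i, r.j, r.hij⟩

/-- A sign assignment on a set `R` of rectangles: a `{1,−1}`-valued map satisfying
(S-1), (S-2) and (S-3) whenever all rectangles involved lie in `R`. -/
def IsSignAssignment {N : ℕ} (R : Set (GridRect N)) (S : GridRect N → ℤ) : Prop :=
  (∀ r ∈ R, S r = 1 ∨ S r = -1) ∧
  (∀ r ∈ R, revRect r ∈ R → S r * S (revRect r) = 1) ∧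
  (∀ r ∈ R, sameRect r ∈ R → S r * S (sameRect r) = -1) ∧
  (∀ r1 r2 r3 r4 : GridRect N, IsSquareOf r1 r2 r3 r4 →
    r1 ∈ R → r2 ∈ R → r3 ∈ R → r4 ∈ R → S r1 * S r2 * S r3 * S r4 = -1)

/-- Gauge equivalence of two sign functions on a set `R` of rectangles. -/
def GaugeEquiv {N : ℕ} (R : Set (GridRect N)) (S S' : GridRect N → ℤ) : Prop :=
  ∃ u : Equiv.Perm (Fin N) → ℤ, (∀ σ, u σ = 1 ∨ u σ = -1) ∧
    ∀ r ∈ R, S' r = u r.perm * S r * u r.endPerm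

/-! Existence comes from a spin extension of the symmetric group inside a Clifford algebra. The root
`eᵢ - eⱼ` lifts the transposition of `i` and `j`; it squares to `-1`, changes sign when `i` and `j`
are exchanged, and satisfies `ρ * ρ' = -(ρ'' * ρ)`, where `ρ''` is the reflection of `ρ'` by `ρ`.
Once a lift of every permutation is chosen, right multiplication by roots attaches a sign to every
rectangle, and these three facts become (S-2), (S-1) and (S-3): the equality of domains in a square
forces the two pairs of rectangles to be related as in the third fact.

For uniqueness, the ratio of two sign assignments depends only on the endpoints of a rectangle, and
its product around the 4-cycles given by the relations `s * t = (s * t * s⁻¹) * s` between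
transpositions is trivial. On the Cayley graph of a set of transpositions, such a function is a
coboundary. The rectangles of `F'` preserving the set of the first `m` columns form such a graph,
and the others multiply a generator on the left by the exchange of the rows `m` and `m + 1`. -/

section Transposition

open Equiv

variable {α : Type*} [DecidableEq α] {s t s' t' : Perm α} {a b : α}

lemma eq_swap_of_apply_eq (ht : t.IsSwap) (hab : a ≠ b) (h : t a = b) : t = swap a b := by
  obtain ⟨i, j, -, rfl⟩ := ht
  have hmoved : swap i j a ≠ a := h ▸ hab.symm
  rcases (swap_apply_ne_self_iff.1 hmoved).2 with rfl | rfl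
  · rw [← h, swap_apply_left]
  · rw [← h, swap_apply_right, swap_comm]

lemma exists_apply_ne_and_apply_eq (hs : s.IsSwap) (ht : t.IsSwap) (hst : s ≠ t) :
    ∃ a, s a ≠ a ∧ t a = a := by
  by_contra! h
  obtain ⟨i, j, hij, rfl⟩ := hs
  have hi : t i ≠ i := h i (by rw [swap_apply_left]; exact hij.symm)
  have hj : t j ≠ j := h j (by rw [swap_apply_right]; exact hij)
  have hti := eq_swap_of_apply_eq ht hi.symm rfl
  rw [hti] at hj
  rcases (swap_apply_ne_self_iff.1 hj).2 with h | h
  · exact hij h.symm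
  · exact hst (by rw [hti, ← h])

lemma isSwap_mul_self (ht : t.IsSwap) : t * t = 1 := by
  obtain ⟨i, j, -, rfl⟩ := ht
  exact swap_mul_self i j

lemma isSwap_conj (s : Perm α) (ht : t.IsSwap) : (s * t * s⁻¹).IsSwap := by
  obtain ⟨i, j, hij, rfl⟩ := ht
  exact ⟨s i, s j, s.injective.ne hij, (swap_apply_apply s i j).symm⟩

lemma exists_swap_swap_or_apply_eq (hs : s.IsSwap) (ht : t.IsSwap) (hst : s ≠ t) :
    (∃ a b c, a ≠ b ∧ a ≠ c ∧ b ≠ c ∧ s = swap a b ∧ t = swap a c) ∨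
      ∃ i j, i ≠ j ∧ s = swap i j ∧ t i = i ∧ t j = j := by
  obtain ⟨i, j, hij, rfl⟩ := hs
  by_cases hi : t i = i
  · by_cases hj : t j = j
    · exact .inr ⟨i, j, hij, rfl, hi, hj⟩
    · have ht_eq := eq_swap_of_apply_eq ht (Ne.symm hj) rfl
      refine .inl ⟨j, i, t j, hij.symm, Ne.symm hj, fun h ↦ hst ?_, swap_comm i j, ht_eq⟩
      rw [ht_eq, ← h, swap_comm]
  · have ht_eq := eq_swap_of_apply_eq ht (Ne.symm hi) rfl
    refine .inl ⟨i, j, t i, hij, Ne.symm hi, fun h ↦ hst ?_, rfl, ht_eq⟩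
    rw [ht_eq, ← h]

/-- A nontrivial product of two transpositions determines its factors up to the relation
`s * t = (s * t * s⁻¹) * s`. -/
lemma eq_or_eq_or_eq_of_mul_eq_mul (hs : s.IsSwap) (ht : t.IsSwap) (hs' : s'.IsSwap)
    (ht' : t'.IsSwap) (hst : s ≠ t) (h : s * t = s' * t') : s' = s ∨ t' = s ∨ s' = t := by
  obtain ⟨a, hsa, hta⟩ := exists_apply_ne_and_apply_eq hs ht hst
  have hs_eq : s = swap a (s a) := eq_swap_of_apply_eq hs hsa.symm rfl
  have hs'a : s' (t' a) = s a := by rw [← Perm.mul_apply, ← h, Perm.mul_apply, hta]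
  by_cases ht'a : t' a = a
  · rw [ht'a] at hs'a
    exact .inl ((eq_swap_of_apply_eq hs' hsa.symm hs'a).trans hs_eq.symm)
  by_cases hcb : t' a = s a
  · exact .inr (.inl ((eq_swap_of_apply_eq ht' hsa.symm hcb).trans hs_eq.symm))
  have hs'_eq : s' = swap (t' a) (s a) := eq_swap_of_apply_eq hs' hcb hs'a
  have ht'_eq : t' = swap a (t' a) := eq_swap_of_apply_eq ht' (Ne.symm ht'a) rfl
  have hz : s (t (t' a)) = a := by
    rw [← Perm.mul_apply, h, Perm.mul_apply, congrArg (· (t' a)) ht'_eq, swap_apply_right, hs'_eq,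
      swap_apply_of_ne_of_ne (Ne.symm ht'a) hsa.symm]
  have htc : t (t' a) = s a := s.injective <| by
    rw [hz, congrArg (· (s a)) hs_eq, swap_apply_right]
  exact .inr (.inr (hs'_eq.trans (eq_swap_of_apply_eq ht hcb htc).symm))

lemma mul_swap_eq_swap_mul_of_apply_eq (ha : t a = a) (hb : t b = b) :
    t * swap a b = swap a b * t := by
  rw [← mul_inv_eq_iff_eq_mul, ← swap_apply_apply, ha, hb]

lemma swap_mul_swap_eq_swap_mul_swap {c : α} (hac : a ≠ c) (hbc : b ≠ c) :
    swap a b * swap a c = swap b c * swap a b := by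
  rw [← mul_inv_eq_iff_eq_mul, ← swap_apply_apply, swap_apply_left,
    swap_apply_of_ne_of_ne hac.symm hbc.symm]

lemma eq_or_eq_of_swap_eq_swap {i j k l : α} (hij : i ≠ j) (h : swap i j = swap k l) :
    i = k ∧ j = l ∨ i = l ∧ j = k := by
  have hi : swap k l i = j := by rw [← h, swap_apply_left]
  have hmoved : swap k l i ≠ i := hi ▸ hij.symm
  rcases (swap_apply_ne_self_iff.1 hmoved).2 with rfl | rfl
  · exact .inl ⟨rfl, by rw [← hi, swap_apply_left]⟩
  · exact .inr ⟨rfl, by rw [← hi, swap_apply_right]⟩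

lemma eq_and_eq_of_swap_eq_swap {i j k l c : α} (hij : i ≠ j) (h : swap i j = swap k l)
    (hc : swap i j c ≠ c) (hi : c = i → c = k) (hj : c = j → c = l) : i = k ∧ j = l := by
  rcases eq_or_eq_of_swap_eq_swap hij h with h | ⟨rfl, rfl⟩
  · exact h
  · rcases (swap_apply_ne_self_iff.1 hc).2 with rfl | rfl
    · exact absurd (hi rfl) hij
    · exact absurd (hj rfl) hij.symm

end Transposition

/-- A `G`-cochain `f` with values in `H`, where `f σ t` labels the edge `σ → σ * t` of the Cayley
graph of `G` with generators `T`, is flat if its product along the 2-cycles `σ, σ * t, σ` and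
along the 4-cycles coming from the relations `s * t = (s * t * s⁻¹) * s` is trivial. -/
structure IsFlat {G H : Type*} [Group G] [Group H] (T : Set G) (f : G → G → H) : Prop where
  mul_self : ∀ σ, ∀ t ∈ T, f σ t * f (σ * t) t = 1
  mul_conj : ∀ σ, ∀ s ∈ T, ∀ t ∈ T,
    f σ s * f (σ * s) t = f σ (s * t * s⁻¹) * f (σ * (s * t * s⁻¹)) s

open Equiv in
/-- A set of transpositions closed under conjugation by its own elements. -/
structure IsTranspositionSet {α : Type*} [DecidableEq α] (T : Set (Perm α)) : Prop where
  isSwap : ∀ {t}, t ∈ T → t.IsSwap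
  conj_mem : ∀ {s t}, s ∈ T → t ∈ T → s * t * s⁻¹ ∈ T

/-- The star of `κ` in the graph on `α` whose edges are the pairs exchanged by an element of `T`:
the point `κ` and its neighbours. -/
def swapStar {α : Type*} [DecidableEq α] (T : Set (Equiv.Perm α)) (κ : α) : Set α :=
  {c | c = κ ∨ Equiv.swap c κ ∈ T}

/-- The label under `f` of the edge from `σ` to `σ * swap c κ`, a loop when `c = κ`. -/
def starLabel {α H : Type*} [DecidableEq α] [One H] (f : Equiv.Perm α → Equiv.Perm α → H) (κ : α)
    (σ : Equiv.Perm α) (c : α) : H :=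
  if c = κ then 1 else f σ (Equiv.swap c κ)

namespace IsTranspositionSet

open Equiv

variable {α : Type*} [DecidableEq α] {T : Set (Perm α)} {κ : α} {t : Perm α}

lemma mul_self (hT : IsTranspositionSet T) (ht : t ∈ T) : t * t = 1 :=
  isSwap_mul_self (hT.isSwap ht)

lemma inv_eq (hT : IsTranspositionSet T) (ht : t ∈ T) : t⁻¹ = t :=
  inv_eq_of_mul_eq_one_left (hT.mul_self ht)

lemma sep_apply_eq (hT : IsTranspositionSet T) (κ : α) : IsTranspositionSet {t ∈ T | t κ = κ} where
  isSwap ht := hT.isSwap ht.1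
  conj_mem := fun hs ht ↦ ⟨hT.conj_mem hs.1 ht.1, by
    rw [hT.inv_eq hs.1, Perm.mul_apply, Perm.mul_apply, hs.2, ht.2, hs.2]⟩

lemma apply_mem_swapStar (hT : IsTranspositionSet T) (ht : t ∈ T) {c : α} (hc : c ∈ swapStar T κ) :
    t c ∈ swapStar T κ := by
  by_cases hκ : t κ = κ
  · refine hc.imp (fun h ↦ by rw [h, hκ]) fun h ↦ ?_
    have := hT.conj_mem ht h
    rwa [← swap_apply_apply, hκ] at this
  obtain ⟨i, hi, rfl⟩ : ∃ i, i ≠ κ ∧ t = swap i κ :=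
    ⟨t κ, hκ, (eq_swap_of_apply_eq (hT.isSwap ht) (Ne.symm hκ) rfl).trans (swap_comm _ _)⟩
  rcases eq_or_ne c κ with rfl | hcκ
  · exact .inr (by rwa [swap_apply_right])
  rcases eq_or_ne c i with rfl | hci
  · exact .inl (swap_apply_left c κ)
  · rwa [swap_apply_of_ne_of_ne hci hcκ]

lemma image_swapStar (hT : IsTranspositionSet T) (ht : t ∈ T) : t '' swapStar T κ = swapStar T κ :=
  Set.Subset.antisymm (Set.image_subset_iff.2 fun _ ↦ hT.apply_mem_swapStar ht) fun c hc ↦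
    ⟨t c, hT.apply_mem_swapStar ht hc, by rw [← Perm.mul_apply, hT.mul_self ht, Perm.one_apply]⟩

end IsTranspositionSet

open Equiv in
lemma isTranspositionSet_isSwap {α : Type*} [DecidableEq α] :
    IsTranspositionSet {t : Perm α | t.IsSwap} where
  isSwap := id
  conj_mem {s _} _ ht := isSwap_conj s ht

namespace IsFlat

section Gauge

variable {G H : Type*} [Group G] [Group H] {T T' : Set G} {f : G → G → H}

lemma mono (hf : IsFlat T f) (h : T' ⊆ T) : IsFlat T' f where
  mul_self σ t ht := hf.mul_self σ t (h ht)
  mul_conj σ s hs t ht := hf.mul_conj σ s (h hs) t (h ht)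

lemma gauge (hf : IsFlat T f) (hT : ∀ t ∈ T, t * t = 1) (u : G → H) :
    IsFlat T (fun σ t ↦ u σ * f σ t * (u (σ * t))⁻¹) where
  mul_self σ t ht := by
    have h := hf.mul_self σ t ht
    calc _ = u σ * (f σ t * f (σ * t) t) * (u (σ * t * t))⁻¹ := by group
      _ = 1 := by rw [h, mul_assoc σ, hT t ht]; simp
  mul_conj σ s hs t ht := by
    have h := hf.mul_conj σ s hs t ht
    have hend : σ * (s * t * s⁻¹) * s = σ * s * t := by group
    calc _ = u σ * (f σ s * f (σ * s) t) * (u (σ * s * t))⁻¹ := by group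
      _ = _ := by rw [h, hend]; group

end Gauge

section Perm

open Equiv

variable {α H : Type*} [DecidableEq α] [Group H] {T : Set (Perm α)} {f : Perm α → Perm α → H}
  {κ : α} {σ t : Perm α} {c : α}

lemma starLabel_of_apply_eq (hf : IsFlat T f) (hT : IsTranspositionSet T)
    (h1 : ∀ σ, ∀ t ∈ T, t κ = κ → f σ t = 1) (ht : t ∈ T) (hκ : t κ = κ) (hc : c ∈ swapStar T κ) :
    starLabel f κ (σ * t) (t c) = starLabel f κ σ c := by
  by_cases hcκ : c = κ
  · simp only [starLabel, hcκ, hκ, if_true]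
  have htc : t c ≠ κ := fun h ↦ hcκ (t.injective (h.trans hκ.symm))
  have hconj : t * swap (t c) κ * t⁻¹ = swap c κ := by
    rw [← swap_apply_apply, hκ, ← Perm.mul_apply, hT.mul_self ht, Perm.one_apply]
  have h := hf.mul_conj σ t ht _ ((hT.apply_mem_swapStar ht hc).resolve_left htc)
  rw [hconj, h1 σ t ht hκ, h1 _ t ht hκ, one_mul, mul_one] at h
  simpa only [starLabel, hcκ, htc, if_false] using h

lemma starLabel_eq_mul (hf : IsFlat T f) (hT : IsTranspositionSet T)
    (h1 : ∀ σ, ∀ t ∈ T, t κ = κ → f σ t = 1) (ht : t ∈ T) (hc : c ∈ swapStar T κ) :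
    starLabel f κ σ c = f σ t * starLabel f κ (σ * t) (t c) := by
  by_cases hκ : t κ = κ
  · rw [starLabel_of_apply_eq hf hT h1 ht hκ hc, h1 σ t ht hκ, one_mul]
  obtain ⟨i, hi, rfl⟩ : ∃ i, i ≠ κ ∧ t = swap i κ :=
    ⟨t κ, hκ, (eq_swap_of_apply_eq (hT.isSwap ht) (Ne.symm hκ) rfl).trans (swap_comm _ _)⟩
  rcases eq_or_ne c κ with rfl | hcκ
  · simpa only [starLabel, swap_apply_right, hi, if_true, if_false] using
      (hf.mul_self σ _ ht).symm
  rcases eq_or_ne c i with rfl | hci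
  · simp only [starLabel, swap_apply_left, hcκ, if_true, if_false, mul_one]
  have hcT : swap c κ ∈ T := hc.resolve_left hcκ
  have hconj : swap i κ * swap c κ * (swap i κ)⁻¹ = swap c i := by
    rw [← swap_apply_apply, swap_apply_of_ne_of_ne hci hcκ, swap_apply_right]
  have hciT : swap c i ∈ T := hconj ▸ hT.conj_mem ht hcT
  have hciκ : swap c i κ = κ := swap_apply_of_ne_of_ne hcκ.symm hi.symm
  have hflat := hf.mul_conj σ _ ht _ hcT
  have htrans := starLabel_of_apply_eq (σ := σ) hf hT h1 hciT hciκ hc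
  rw [hconj, h1 σ _ hciT hciκ, one_mul] at hflat
  simp only [starLabel, swap_apply_left, hcκ, hi, if_false] at htrans
  simp only [starLabel, swap_apply_of_ne_of_ne hci hcκ, hcκ, if_false, hflat, htrans]

/-- The set `σ '' swapStar T κ` is constant along the edges labelled by `T`, so that a point chosen
in it provides a common base point for the potential. -/
lemma exists_potential_of_eq_one (hf : IsFlat T f) (hT : IsTranspositionSet T)
    (h1 : ∀ σ, ∀ t ∈ T, t κ = κ → f σ t = 1) :
    ∃ v : Perm α → H, ∀ σ, ∀ t ∈ T, v (σ * t) = v σ * f σ t := by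
  have hne (σ : Perm α) : (σ '' swapStar T κ).Nonempty := ⟨σ κ, κ, .inl rfl, rfl⟩
  let base (σ : Perm α) : α := σ⁻¹ (hne σ).some
  have hbase_mem (σ : Perm α) : base σ ∈ swapStar T κ := by
    obtain ⟨c, hc, hσc⟩ := (hne σ).some_mem
    simpa only [base, ← hσc, Perm.inv_def, symm_apply_apply] using hc
  have hbase (σ : Perm α) {t : Perm α} (ht : t ∈ T) : base (σ * t) = t (base σ) := by
    have himage : ⇑(σ * t) '' swapStar T κ = σ '' swapStar T κ := by
      rw [Perm.coe_mul, Set.image_comp, hT.image_swapStar ht]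
    simp only [base, himage, mul_inv_rev, Perm.mul_apply, hT.inv_eq ht]
  refine ⟨fun σ ↦ (starLabel f κ σ (base σ))⁻¹, fun σ t ht ↦ ?_⟩
  simp only [starLabel_eq_mul (σ := σ) hf hT h1 ht (hbase_mem σ), hbase σ ht]
  group

/-- Induction on a finite set of points containing all those moved by the transpositions. -/
theorem exists_potential [Finite α] (hf : IsFlat T f) (hT : IsTranspositionSet T) :
    ∃ u : Perm α → H, ∀ σ, ∀ t ∈ T, u (σ * t) = u σ * f σ t := by
  cases nonempty_fintype α
  suffices h : ∀ (s : Finset α) (T : Set (Perm α)), IsTranspositionSet T → IsFlat T f →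
      (∀ t ∈ T, ∀ a ∉ s, t a = a) → ∃ u : Perm α → H, ∀ σ, ∀ t ∈ T, u (σ * t) = u σ * f σ t from
    h Finset.univ T hT hf fun _ _ a ha ↦ absurd (Finset.mem_univ a) ha
  intro s
  induction s using Finset.induction_on with
  | empty =>
    intro T hT _ hfix
    refine ⟨1, fun _ t ht ↦ ?_⟩
    obtain ⟨i, j, hij, rfl⟩ := hT.isSwap ht
    exact absurd (hfix _ ht i (Finset.notMem_empty i)) (by rw [swap_apply_left]; exact hij.symm)
  | insert κ s _ ih =>
    intro T hT hf hfix
    obtain ⟨u, hu⟩ := ih {t ∈ T | t κ = κ} (hT.sep_apply_eq κ) (hf.mono (Set.sep_subset _ _))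
      fun t ht a ha ↦ by
        rcases eq_or_ne a κ with rfl | haκ
        · exact ht.2
        · exact hfix t ht.1 a (mt (Finset.mem_of_mem_insert_of_ne · haκ) ha)
    obtain ⟨v, hv⟩ := exists_potential_of_eq_one (κ := κ) (hf.gauge (fun _ ↦ hT.mul_self) u) hT
      fun σ t ht hκ ↦ by rw [hu σ t ⟨ht, hκ⟩, mul_inv_cancel]
    refine ⟨fun σ ↦ v σ * u σ, fun σ t ht ↦ ?_⟩
    simp only [hv σ t ht]
    group

end Perm

end IsFlat

section Spin

open Equiv

variable {α : Type*} [Fintype α]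

/-- The quadratic form `-½ ∑ xᵢ²`, normalised so that the differences of distinct basis vectors
have square `-1`. -/
def spinForm (α : Type*) [Fintype α] : QuadraticForm ℚ (α → ℚ) :=
  QuadraticMap.weightedSumSquares ℚ fun _ ↦ (-1 / 2 : ℚ)

/-- The Clifford algebra in which the spin extension of the symmetric group on `α` lives. -/
abbrev SpinAlgebra (α : Type*) [Fintype α] : Type _ := CliffordAlgebra (spinForm α)

variable [DecidableEq α]

/-- The generator of the Clifford algebra given by the basis vector at `i`. -/
def spinGen (i : α) : SpinAlgebra α := CliffordAlgebra.ι (spinForm α) (Pi.single i 1)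

/-- The difference `eᵢ - eⱼ`, which lifts the transposition of `i` and `j`. -/
def root (i j : α) : SpinAlgebra α := spinGen i - spinGen j

lemma spinGen_mul_self (i : α) : spinGen i * spinGen i = algebraMap ℚ (SpinAlgebra α) (-1 / 2) := by
  rw [spinGen, CliffordAlgebra.ι_sq_scalar]
  congr 1
  simp [spinForm, QuadraticMap.weightedSumSquares_apply, Pi.single_apply]

lemma spinGen_mul_comm {i j : α} (hij : i ≠ j) :
    spinGen i * spinGen j = -(spinGen j * spinGen i) := by
  refine CliffordAlgebra.ι_mul_ι_comm_of_isOrtho (QuadraticMap.isOrtho_def.2 ?_)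
  simp only [spinForm, QuadraticMap.weightedSumSquares_apply, Pi.add_apply, Pi.single_apply,
    ← Finset.sum_add_distrib]
  refine Finset.sum_congr rfl fun k _ ↦ ?_
  split_ifs with hi hj
  · exact absurd (hi.symm.trans hj) hij
  all_goals simp

lemma root_swap (i j : α) : root j i = -root i j := (neg_sub _ _).symm

lemma root_mul_self {i j : α} (hij : i ≠ j) : root i j * root i j = -1 := by
  have hsum : spinGen i * spinGen i + spinGen j * spinGen j = -1 := by
    rw [spinGen_mul_self, spinGen_mul_self, ← map_add]
    norm_num
  calc root i j * root i j
      = spinGen i * spinGen i + spinGen j * spinGen j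
        - (spinGen i * spinGen j + spinGen j * spinGen i) := by rw [root]; noncomm_ring
    _ = -1 := by rw [hsum, spinGen_mul_comm hij]; simp

lemma root_mul_spinGen {i j : α} (hij : i ≠ j) (k : α) :
    root i j * spinGen k = -(spinGen (swap i j k) * root i j) := by
  have hsq : spinGen i * spinGen i = spinGen j * spinGen j := by
    rw [spinGen_mul_self, spinGen_mul_self]
  rcases eq_or_ne k i with rfl | hki
  · rw [swap_apply_left, root, sub_mul, mul_sub, hsq]
    abel
  rcases eq_or_ne k j with rfl | hkj
  · rw [swap_apply_right, root, sub_mul, mul_sub, hsq]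
    abel
  · rw [swap_apply_of_ne_of_ne hki hkj, root, sub_mul, mul_sub, spinGen_mul_comm hki,
      spinGen_mul_comm hkj]
    abel

lemma root_mul_root {i j : α} (hij : i ≠ j) (k l : α) :
    root i j * root k l = -(root (swap i j k) (swap i j l) * root i j) := by
  rw [root.eq_def k, root.eq_def (swap i j k), mul_sub, sub_mul, root_mul_spinGen hij,
    root_mul_spinGen hij]
  abel

/-- The root `eᵢ - eⱼ` as a unit. -/
def rootUnit (i j : α) (hij : i ≠ j) : (SpinAlgebra α)ˣ where
  val := root i j
  inv := root j i
  val_inv := by rw [root_swap i j, mul_neg, root_mul_self hij, neg_neg]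
  inv_val := by rw [root_swap i j, neg_mul, root_mul_self hij, neg_neg]

/-- The subgroup `{1, -1}` of the units of a ring. -/
def signSubgroup (A : Type*) [Ring A] : Subgroup Aˣ where
  carrier := {x | x = 1 ∨ x = -1}
  mul_mem' := by rintro a b (rfl | rfl) (rfl | rfl) <;> simp
  one_mem' := .inl rfl
  inv_mem' := by rintro a (rfl | rfl) <;> simp

instance (A : Type*) [Ring A] : (signSubgroup A).Normal where
  conj_mem := by
    rintro x (rfl | rfl) g
    · exact .inl (by group)
    · exact .inr (by simp)

lemma mk_signSubgroup_eq_iff {A : Type*} [Ring A] {x y : Aˣ} :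
    (x : Aˣ ⧸ signSubgroup A) = y ↔ y = x ∨ y = -x := by
  rw [QuotientGroup.eq]
  change x⁻¹ * y = 1 ∨ x⁻¹ * y = -1 ↔ _
  rw [inv_mul_eq_iff_eq_mul, inv_mul_eq_iff_eq_mul, mul_one, mul_neg, mul_one]

/-- The class up to sign of the root lifting a transposition; trivial on other permutations. -/
noncomputable def spinClass (t : Perm α) : (SpinAlgebra α)ˣ ⧸ signSubgroup (SpinAlgebra α) :=
  open Classical in if ht : t.IsSwap then rootUnit _ _ ht.choose_spec.choose_spec.1 else 1

lemma spinClass_swap {i j : α} (hij : i ≠ j) : spinClass (swap i j) = rootUnit i j hij := by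
  have ht : (swap i j).IsSwap := ⟨i, j, hij, rfl⟩
  rw [spinClass, dif_pos ht, mk_signSubgroup_eq_iff]
  rcases eq_or_eq_of_swap_eq_swap hij ht.choose_spec.choose_spec.2 with ⟨h1, h2⟩ | ⟨h1, h2⟩
  · exact .inl (Units.ext (congrArg₂ root h1 h2))
  · exact .inr (Units.ext ((congrArg₂ root h1 h2).trans (root_swap _ _)))

lemma isFlat_spinClass : IsFlat {t : Perm α | t.IsSwap} fun _ t ↦ spinClass t where
  mul_self := by
    rintro - _ ⟨i, j, hij, rfl⟩
    rw [spinClass_swap hij, ← QuotientGroup.mk_mul, ← QuotientGroup.mk_one, mk_signSubgroup_eq_iff]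
    exact .inr (Units.ext (by simp [rootUnit, root_mul_self hij]))
  mul_conj := by
    rintro - _ ⟨i, j, hij, rfl⟩ _ ⟨k, l, hkl, rfl⟩
    have hkl' := (swap i j).injective.ne hkl
    rw [← swap_apply_apply, spinClass_swap hij, spinClass_swap hkl, spinClass_swap hkl',
      ← QuotientGroup.mk_mul, ← QuotientGroup.mk_mul, mk_signSubgroup_eq_iff]
    exact .inr (Units.ext (by simp [rootUnit, root_mul_root hij k l]))

/-- A choice of lifts of the permutations to the spin extension of the symmetric group, which is
generated by the roots. The signs record the failure of the lifts to be multiplicative. -/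
structure SpinLift (α : Type*) [Fintype α] [DecidableEq α] where
  lift : Perm α → (SpinAlgebra α)ˣ
  sign : Perm α → α → α → ℤˣ
  lift_mul_root : ∀ σ i j, i ≠ j →
    (lift σ : SpinAlgebra α) * root i j = sign σ i j • (lift (σ * swap i j) : SpinAlgebra α)

namespace SpinLift

instance : Nonempty (SpinLift α) := by
  obtain ⟨u, hu⟩ := (isFlat_spinClass (α := α)).exists_potential isTranspositionSet_isSwap
  have hsign (σ : Perm α) (i j : α) : ∃ ε : ℤˣ, i ≠ j →
      ((u σ).out : SpinAlgebra α) * root i j =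
        ε • ((u (σ * swap i j)).out : SpinAlgebra α) := by
    by_cases hij : i = j
    · exact ⟨1, absurd hij⟩
    have h := hu σ (swap i j) ⟨i, j, hij, rfl⟩
    rw [spinClass_swap hij, ← (u σ).out_eq', ← (u (σ * swap i j)).out_eq', ← QuotientGroup.mk_mul,
      mk_signSubgroup_eq_iff] at h
    rcases h with h | h
    · exact ⟨1, fun _ ↦ (congrArg Units.val h).trans (one_smul _ _).symm⟩
    · exact ⟨-1, fun _ ↦ (congrArg Units.val h).trans (by simp)⟩
  choose ε hε using hsign
  exact ⟨⟨fun σ ↦ (u σ).out, ε, hε⟩⟩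

variable (Λ : SpinLift α) {σ : Perm α} {i j k l : α}

lemma lift_mul_root_mul_root (hij : i ≠ j) (hkl : k ≠ l) :
    (Λ.lift σ : SpinAlgebra α) * (root i j * root k l) =
      (Λ.sign σ i j * Λ.sign (σ * swap i j) k l) •
        (Λ.lift (σ * swap i j * swap k l) : SpinAlgebra α) := by
  rw [← mul_assoc, Λ.lift_mul_root σ i j hij, smul_mul_assoc, Λ.lift_mul_root _ k l hkl, mul_smul]

lemma smul_lift_injective {ε δ : ℤˣ}
    (h : ε • (Λ.lift σ : SpinAlgebra α) = δ • (Λ.lift σ : SpinAlgebra α)) : ε = δ := by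
  have : CharZero (SpinAlgebra α) := algebraRat.charZero _
  have hcast : ((ε : ℤ) : SpinAlgebra α) = (δ : ℤ) := by
    simpa only [Units.smul_def, zsmul_eq_mul, Units.mul_left_inj] using h
  exact Units.ext (Int.cast_injective hcast)

lemma sign_mul_sign_eq_neg {i' j' k' l' : α} (hij : i ≠ j) (hkl : k ≠ l)
    (hij' : i' ≠ j') (hkl' : k' ≠ l') (hswap : swap i j * swap k l = swap i' j' * swap k' l')
    (hroot : root i j * root k l = -(root i' j' * root k' l')) :
    Λ.sign σ i j * Λ.sign (σ * swap i j) k l =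
      -(Λ.sign σ i' j' * Λ.sign (σ * swap i' j') k' l') := by
  refine Λ.smul_lift_injective (σ := σ * swap i j * swap k l) ?_
  rw [← Λ.lift_mul_root_mul_root hij hkl, hroot, mul_neg, Λ.lift_mul_root_mul_root hij' hkl',
    mul_assoc σ, ← hswap, mul_assoc σ, Units.neg_smul]

lemma sign_mul_sign_same (hij : i ≠ j) : Λ.sign σ i j * Λ.sign (σ * swap i j) i j = -1 := by
  refine Λ.smul_lift_injective (σ := σ * swap i j * swap i j) ?_
  rw [← Λ.lift_mul_root_mul_root hij hij, root_mul_self hij, mul_neg_one, mul_assoc, swap_mul_self,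
    mul_one, Units.neg_smul, one_smul]

lemma sign_mul_sign_reverse (hij : i ≠ j) : Λ.sign σ i j * Λ.sign (σ * swap i j) j i = 1 := by
  refine Λ.smul_lift_injective (σ := σ * swap i j * swap j i) ?_
  rw [← Λ.lift_mul_root_mul_root hij hij.symm, root_swap i j, mul_neg, root_mul_self hij, neg_neg,
    mul_one, swap_comm j i, mul_assoc, swap_mul_self, mul_one, one_smul]

end SpinLift

end Spin

section CyclicInterval

variable {N : ℕ}

/-- The indicator function of the cyclic interval `{i, i + 1, …, j - 1}`. -/
def cycInd (i j c : Fin N) : ℤ := if c - i < j - i then 1 else 0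

lemma sub_lt_sub_iff_cyclic (a b c d : Fin N) : b - a < d - c ↔
    (b - a + if a ≤ b then 0 else N : ℤ) < d - c + if c ≤ d then 0 else N := by
  rw [Fin.lt_def, ← Fin.intCast_val_sub_eq_sub_add_ite, ← Fin.intCast_val_sub_eq_sub_add_ite,
    Int.ofNat_lt]

lemma cycInd_left {i j : Fin N} (hij : i ≠ j) : cycInd i j i = 1 := by
  rw [cycInd, if_pos]
  rw [sub_lt_sub_iff_cyclic]
  simp only [Fin.le_def]
  split_ifs <;> omega

lemma cycInd_sub_cycInd_sub_one [NeZero N] {i j : Fin N} (hij : i ≠ j) (c : Fin N) :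
    cycInd i j c - cycInd i j (c - 1) = (if c = i then 1 else 0) - if c = j then 1 else 0 := by
  have hN : 1 < N := by omega
  have h1 : (c - 1 : Fin N) = (c - 1 + if 1 ≤ (c : ℕ) then 0 else N : ℤ) := by
    rw [Fin.intCast_val_sub_eq_sub_add_ite]
    simp only [Fin.le_def, Fin.val_one', Nat.mod_eq_of_lt hN, Nat.cast_one]
  simp only [cycInd, sub_lt_sub_iff_cyclic, Fin.le_def, Fin.ext_iff] at *
  split_ifs at * <;> omega

lemma cycInd_add_cycInd {a b c : Fin N} (h : b - a < c - a) (p : Fin N) :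
    cycInd a b p + cycInd b c p = cycInd a c p := by
  rw [sub_lt_sub_iff_cyclic] at h
  simp only [cycInd, sub_lt_sub_iff_cyclic, Fin.le_def] at *
  split_ifs at * <;> omega

lemma cyclic_or_cyclic_swap_left {a b c : Fin N} (hac : a ≠ c) (hbc : b ≠ c) :
    b - a < c - a ∨ a - b < c - b := by
  simp only [sub_lt_sub_iff_cyclic, Fin.le_def] at *
  split_ifs at * <;> omega

lemma cyclic_or_cyclic_swap_right {b c : Fin N} (hbc : b ≠ c) (a : Fin N) :
    b - a < c - a ∨ c - a < b - a := by
  simp only [sub_lt_sub_iff_cyclic, Fin.le_def] at *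
  split_ifs at * <;> omega

end CyclicInterval

namespace GridRect

open Equiv

variable {N : ℕ}

/-- The transposition of the two columns bounding the rectangle. -/
def colSwap (r : GridRect N) : Perm (Fin N) := swap r.i r.j

@[ext]
lemma ext {r r' : GridRect N} (hperm : r.perm = r'.perm) (hi : r.i = r'.i) (hj : r.j = r'.j) :
    r = r' := by
  cases r
  cases r'
  congr

lemma colSwap_mul_self (r : GridRect N) : r.colSwap * r.colSwap = 1 := swap_mul_self _ _

lemma isSwap_colSwap (r : GridRect N) : r.colSwap.IsSwap :=
  Perm.swap_isSwap_iff.2 r.hij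

lemma endPerm_eq (r : GridRect N) : r.endPerm = r.perm * r.colSwap := rfl

lemma dom_eq (r : GridRect N) (p : Fin N × Fin N) :
    (r.dom p : ℤ) = cycInd r.i r.j p.1 * cycInd (r.perm r.i) (r.perm r.j) p.2 := by
  simp only [dom, cycInd, ite_and]
  split_ifs <;> rfl

/-- The rectangle with the roles of rows and columns exchanged. -/
def transpose (r : GridRect N) : GridRect N :=
  ⟨r.perm⁻¹, r.perm r.i, r.perm r.j, r.perm.injective.ne r.hij⟩

lemma colSwap_transpose (r : GridRect N) :
    r.transpose.colSwap = r.perm * r.colSwap * r.perm⁻¹ := swap_apply_apply _ _ _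

lemma colSwap_transpose_mul_colSwap_transpose {r₁ r₂ : GridRect N} (h : r₂.perm = r₁.endPerm) :
    r₁.transpose.colSwap * r₂.transpose.colSwap =
      r₁.perm * (r₁.colSwap * r₂.colSwap)⁻¹ * r₁.perm⁻¹ := by
  calc _ = r₁.perm * (r₁.colSwap * r₁.colSwap) * (r₂.colSwap * r₂.colSwap) * r₂.colSwap⁻¹ *
        r₁.colSwap⁻¹ * r₁.perm⁻¹ := by
        rw [colSwap_transpose, colSwap_transpose, h, endPerm_eq]
        group
    _ = _ := by
        rw [colSwap_mul_self, colSwap_mul_self]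
        group

lemma dom_transpose (r : GridRect N) (p : Fin N × Fin N) : r.transpose.dom p = r.dom p.swap := by
  simp only [dom, transpose, Perm.inv_def, symm_apply_apply, and_comm, Prod.fst_swap, Prod.snd_swap]

lemma dom_sub_dom_sub_one [NeZero N] (r : GridRect N) (c ρ : Fin N) :
    (r.dom (c, ρ) : ℤ) - r.dom (c - 1, ρ) =
      ((if c = r.i then 1 else 0) - if c = r.j then 1 else 0) *
        cycInd (r.perm r.i) (r.perm r.j) ρ := by
  rw [dom_eq, dom_eq, ← sub_mul, cycInd_sub_cycInd_sub_one r.hij]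

/-- Only the first and third rectangles contribute to the jump of the two sums at column `c`. -/
lemma side_of_dom_add_dom_eq {r₁ r₂ r₃ r₄ : GridRect N}
    (h : ∀ p, r₁.dom p + r₂.dom p = r₃.dom p + r₄.dom p) {c : Fin N}
    (h₂ : c ≠ r₂.i ∧ c ≠ r₂.j) (h₄ : c ≠ r₄.i ∧ c ≠ r₄.j) :
    (c = r₁.i → c = r₃.i) ∧ (c = r₁.j → c = r₃.j) := by
  have : NeZero N := NeZero.of_pos c.pos
  have hjump : ((if c = r₁.i then 1 else 0) - if c = r₁.j then 1 else 0 : ℤ) =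
      ((if c = r₃.i then 1 else 0) - if c = r₃.j then 1 else 0) *
        cycInd (r₃.perm r₃.i) (r₃.perm r₃.j) (r₁.perm r₁.i) := by
    have hc := h (c, r₁.perm r₁.i)
    have hc' := h (c - 1, r₁.perm r₁.i)
    have d₁ := r₁.dom_sub_dom_sub_one c (r₁.perm r₁.i)
    have d₂ := r₂.dom_sub_dom_sub_one c (r₁.perm r₁.i)
    have d₃ := r₃.dom_sub_dom_sub_one c (r₁.perm r₁.i)
    have d₄ := r₄.dom_sub_dom_sub_one c (r₁.perm r₁.i)
    simp only [h₂, h₄, cycInd_left (r₁.perm.injective.ne r₁.hij), if_false, sub_zero, zero_mul,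
      mul_one] at d₁ d₂ d₄
    zify at hc hc'
    linarith
  have h₁ := r₁.hij
  unfold cycInd at hjump
  constructor
  · rintro rfl
    by_contra hc
    simp only [h₁, hc] at hjump
    split_ifs at hjump <;> omega
  · rintro rfl
    by_contra hc
    simp only [h₁.symm, hc] at hjump
    split_ifs at hjump <;> omega

lemma dom_transpose_add_dom_transpose {r₁ r₂ r₃ r₄ : GridRect N}
    (h : ∀ p, r₁.dom p + r₂.dom p = r₃.dom p + r₄.dom p) (p : Fin N × Fin N) :
    r₁.transpose.dom p + r₂.transpose.dom p = r₃.transpose.dom p + r₄.transpose.dom p := by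
  simpa only [dom_transpose] using h p.swap

lemma ne_sides_of_colSwap_apply_eq {r : GridRect N} {c : Fin N} (h : r.colSwap c = c) :
    c ≠ r.i ∧ c ≠ r.j := by
  by_contra! hc
  exact (swap_apply_ne_self_iff.2 ⟨r.hij, or_iff_not_imp_left.2 hc⟩ : swap r.i r.j c ≠ c) h

lemma sides_eq_of_colSwap_eq {r₁ r₂ r₃ r₄ : GridRect N}
    (h : ∀ p, r₁.dom p + r₂.dom p = r₃.dom p + r₄.dom p) (h₁₃ : r₁.colSwap = r₃.colSwap)
    (h₂₄ : r₂.colSwap = r₄.colSwap) (hne : r₁.colSwap ≠ r₂.colSwap) :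
    r₁.i = r₃.i ∧ r₁.j = r₃.j := by
  obtain ⟨c, hc₁, hc₂⟩ := exists_apply_ne_and_apply_eq r₁.isSwap_colSwap r₂.isSwap_colSwap hne
  have hside := side_of_dom_add_dom_eq h (ne_sides_of_colSwap_apply_eq hc₂)
    (ne_sides_of_colSwap_apply_eq (h₂₄ ▸ hc₂))
  exact eq_and_eq_of_swap_eq_swap r₁.hij h₁₃ hc₁ hside.1 hside.2

lemma sides_eq_of_colSwap_mul_eq {r₁ r₂ r₃ r₄ : GridRect N}
    (h : ∀ p, r₁.dom p + r₂.dom p = r₃.dom p + r₄.dom p) (h₁₄ : r₁.colSwap = r₄.colSwap)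
    (hmul : r₁.colSwap * r₂.colSwap = r₃.colSwap * r₄.colSwap) (hne : r₁.colSwap ≠ r₂.colSwap) :
    r₁.colSwap r₂.i = r₃.i ∧ r₁.colSwap r₂.j = r₃.j := by
  obtain ⟨c, hc₂, hc₁⟩ := exists_apply_ne_and_apply_eq r₂.isSwap_colSwap r₁.isSwap_colSwap hne.symm
  have hside := side_of_dom_add_dom_eq (r₁ := r₂) (r₂ := r₁) (fun p ↦ (add_comm _ _).trans (h p))
    (ne_sides_of_colSwap_apply_eq hc₁) (ne_sides_of_colSwap_apply_eq (h₁₄ ▸ hc₁))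
  have hinj {a : Fin N} (ha : c = r₁.colSwap a) : c = a := r₁.colSwap.injective (hc₁.trans ha)
  have h₃ : swap (r₁.colSwap r₂.i) (r₁.colSwap r₂.j) = r₃.colSwap := by
    rw [← h₁₄] at hmul
    rw [swap_apply_apply]
    exact mul_inv_eq_of_eq_mul hmul
  refine eq_and_eq_of_swap_eq_swap (c := c) (r₁.colSwap.injective.ne r₂.hij) h₃ (fun hfix ↦ ?_)
    (fun hc ↦ hside.1 (hinj hc)) fun hc ↦ hside.2 (hinj hc)
  rw [swap_apply_apply, Perm.mul_apply, Perm.mul_apply, Perm.inv_eq_iff_eq.2 hc₁.symm] at hfix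
  exact hc₂ (r₁.colSwap.injective (hfix.trans hc₁.symm))

end GridRect

namespace IsSquareOf

open Equiv GridRect

variable {N : ℕ} {r₁ r₂ r₃ r₄ : GridRect N}

lemma symm (h : IsSquareOf r₁ r₂ r₃ r₄) : IsSquareOf r₃ r₄ r₁ r₂ := by
  obtain ⟨hne, h₁₃, h₂, h₄, hend, hloop, hdom⟩ := h
  exact ⟨hne.symm, h₁₃.symm, h₄, h₂, hend.symm, by rwa [hend, h₁₃], fun p ↦ (hdom p).symm⟩

lemma colSwap_mul_colSwap (h : IsSquareOf r₁ r₂ r₃ r₄) :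
    r₁.colSwap * r₂.colSwap = r₃.colSwap * r₄.colSwap := by
  obtain ⟨-, h₁₃, h₂, h₄, hend, -, -⟩ := h
  rw [endPerm_eq, endPerm_eq, h₂, h₄, endPerm_eq, endPerm_eq, h₁₃, mul_assoc, mul_assoc] at hend
  exact (mul_left_cancel hend).symm

lemma colSwap_ne (h : IsSquareOf r₁ r₂ r₃ r₄) : r₁.colSwap ≠ r₂.colSwap := by
  obtain ⟨-, -, h₂, -, -, hloop, -⟩ := h
  intro heq
  refine hloop ?_
  rw [endPerm_eq, h₂, endPerm_eq, ← heq, mul_assoc, colSwap_mul_self, mul_one]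

lemma colSwap_left_ne (h : IsSquareOf r₁ r₂ r₃ r₄) : r₃.colSwap ≠ r₁.colSwap := by
  intro h₃₁
  have h₂₄ : r₂.colSwap = r₄.colSwap :=
    mul_left_cancel (h.colSwap_mul_colSwap.trans (congrArg (· * r₄.colSwap) h₃₁))
  have hne := h.colSwap_ne
  obtain ⟨hpair, hperm₁₃, hperm₂, hperm₄, -, -, hdom⟩ := h
  have hsides₁ := sides_eq_of_colSwap_eq hdom h₃₁.symm h₂₄ hne
  have hsides₂ := sides_eq_of_colSwap_eq (fun p ↦ by rw [add_comm, hdom p, add_comm]) h₂₄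
    h₃₁.symm hne.symm
  have hperm₂₄ : r₂.perm = r₄.perm := by
    rw [hperm₂, hperm₄, endPerm_eq, endPerm_eq, hperm₁₃, h₃₁]
  exact hpair (Prod.ext (GridRect.ext hperm₁₃.symm hsides₁.1 hsides₁.2)
    (GridRect.ext hperm₂₄ hsides₂.1 hsides₂.2))

lemma root_mul_root_eq_neg_of_colSwap_eq (h : IsSquareOf r₁ r₂ r₃ r₄)
    (h₄₁ : r₄.colSwap = r₁.colSwap) :
    root r₁.i r₁.j * root r₂.i r₂.j = -(root r₃.i r₃.j * root r₄.i r₄.j) := by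
  have hmul := h.colSwap_mul_colSwap
  have hne := h.colSwap_ne
  have hne' := h.symm.colSwap_ne
  obtain ⟨-, hperm₃, hperm₂, hperm₄, -, -, hdom⟩ := h
  have hcol := sides_eq_of_colSwap_mul_eq hdom h₄₁.symm hmul hne
  have hρ : r₃.transpose.colSwap * r₄.transpose.colSwap =
      r₁.transpose.colSwap * r₂.transpose.colSwap := by
    rw [colSwap_transpose_mul_colSwap_transpose hperm₂,
      colSwap_transpose_mul_colSwap_transpose hperm₄, hmul, hperm₃]
  have hρ₃₂ : r₃.transpose.colSwap = r₂.transpose.colSwap := by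
    rw [h₄₁, ← mul_inv_eq_iff_eq_mul] at hmul
    rw [colSwap_transpose, colSwap_transpose, hperm₂, hperm₃, endPerm_eq, ← hmul]
    group
  have hρne : r₃.transpose.colSwap ≠ r₄.transpose.colSwap := by
    intro heq
    have hone := colSwap_transpose_mul_colSwap_transpose hperm₄
    rw [heq, colSwap_mul_self, eq_comm, conj_eq_one_iff, inv_eq_one, mul_eq_one_iff_eq_inv] at hone
    exact hne' (hone.trans (swap_inv _ _))
  have hrow := sides_eq_of_colSwap_mul_eq
    (dom_transpose_add_dom_transpose fun p ↦ (hdom p).symm) hρ₃₂ hρ hρne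
  have happly (k : Fin N) : r₃.transpose.colSwap (r₄.perm k) = r₁.perm k := by
    rw [colSwap_transpose, hperm₄, endPerm_eq, hperm₃, ← Perm.mul_apply]
    simp only [mul_assoc, inv_mul_cancel_left, colSwap_mul_self, mul_one]
  have hi : r₄.i = r₁.i := r₁.perm.injective ((happly _).symm.trans hrow.1)
  have hj : r₄.j = r₁.j := r₁.perm.injective ((happly _).symm.trans hrow.2)
  rw [← hcol.1, ← hcol.2, hi, hj]
  exact root_mul_root r₁.hij r₂.i r₂.j

lemma root_mul_root_eq_neg (h : IsSquareOf r₁ r₂ r₃ r₄) :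
    root r₁.i r₁.j * root r₂.i r₂.j = -(root r₃.i r₃.j * root r₄.i r₄.j) := by
  rcases eq_or_eq_or_eq_of_mul_eq_mul r₁.isSwap_colSwap r₂.isSwap_colSwap r₃.isSwap_colSwap
    r₄.isSwap_colSwap h.colSwap_ne h.colSwap_mul_colSwap with h₃₁ | h₄₁ | h₃₂
  · exact absurd h₃₁ h.colSwap_left_ne
  · exact h.root_mul_root_eq_neg_of_colSwap_eq h₄₁
  · rw [h.symm.root_mul_root_eq_neg_of_colSwap_eq h₃₂.symm, neg_neg]

end IsSquareOf

section Existence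

open Equiv

variable {N : ℕ}

/-- The signs of the rectangles read off from a choice of lifts to the spin extension. -/
def SpinLift.rectSign (Λ : SpinLift (Fin N)) (r : GridRect N) : ℤ := Λ.sign r.perm r.i r.j

lemma SpinLift.isSignAssignment_rectSign (Λ : SpinLift (Fin N)) (R : Set (GridRect N)) :
    IsSignAssignment R Λ.rectSign := by
  refine ⟨fun r _ ↦ ?_, fun r _ _ ↦ ?_, fun r _ _ ↦ ?_, fun r₁ r₂ r₃ r₄ h _ _ _ _ ↦ ?_⟩
  · exact Int.isUnit_iff.1 (Units.isUnit _)
  · exact congrArg Units.val (Λ.sign_mul_sign_reverse r.hij)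
  · exact congrArg Units.val (Λ.sign_mul_sign_same r.hij)
  have hsign := Λ.sign_mul_sign_eq_neg (σ := r₁.perm) r₁.hij r₂.hij r₃.hij r₄.hij
    h.colSwap_mul_colSwap h.root_mul_root_eq_neg
  have hunits : Λ.sign r₁.perm r₁.i r₁.j * Λ.sign r₂.perm r₂.i r₂.j *
      Λ.sign r₃.perm r₃.i r₃.j * Λ.sign r₄.perm r₄.i r₄.j = -1 := by
    obtain ⟨-, hperm₃, hperm₂, hperm₄, -⟩ := h
    rw [hperm₄, hperm₂, GridRect.endPerm_eq, GridRect.endPerm_eq, hperm₃, mul_assoc]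
    exact (congrArg (· * _) hsign).trans ((neg_mul _ _).trans (congrArg _ (Int.units_mul_self _)))
  exact congrArg Units.val hunits

end Existence

section Holonomy

variable {V : Type*}

/-- The product of a function on edges along the 4-cycle `w, x, y, z`. -/
def holonomy (q : Sym2 V → ℤˣ) (w x y z : V) : ℤˣ :=
  q s(w, x) * q s(x, y) * (q s(y, z) * q s(z, w))

lemma holonomy_self (q : Sym2 V → ℤˣ) (x y : V) : holonomy q x y x y = 1 :=
  Int.units_mul_self _

lemma holonomy_reverse (q : Sym2 V → ℤˣ) (w x y z : V) :
    holonomy q z y x w = holonomy q w x y z := by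
  rw [holonomy, holonomy, Sym2.eq_swap (a := z) (b := y), Sym2.eq_swap (a := y) (b := x),
    Sym2.eq_swap (a := x) (b := w), Sym2.eq_swap (a := w) (b := z)]
  ac_rfl

lemma holonomy_swap_swap (q : Sym2 V → ℤˣ) (w x y z : V) :
    holonomy q x w z y = holonomy q w x y z := by
  rw [holonomy, holonomy, Sym2.eq_swap (a := x) (b := w), Sym2.eq_swap (a := w) (b := z),
    Sym2.eq_swap (a := z) (b := y), Sym2.eq_swap (a := y) (b := x)]
  ac_rfl

end Holonomy

section Closed

open Equiv

variable {α : Type*} [DecidableEq α] {Sg : Set (Perm α)} {q : Sym2 (Perm α) → ℤˣ}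

/-- A function on the edges `σ - σ * t` of the Cayley graph of transpositions is closed on a set of
permutations if its holonomy along the 4-cycles in this set coming from the relations
`s * t = (s * t * s⁻¹) * s` is trivial. -/
def IsClosedOn (Sg : Set (Perm α)) (q : Sym2 (Perm α) → ℤˣ) : Prop :=
  ∀ ⦃σ s t : Perm α⦄, s.IsSwap → t.IsSwap → σ ∈ Sg → σ * s ∈ Sg → σ * s * t ∈ Sg →
    σ * (s * t * s⁻¹) ∈ Sg → holonomy q σ (σ * s) (σ * s * t) (σ * (s * t * s⁻¹)) = 1

namespace IsClosedOn

lemma exists_potential [Finite α] (hq : IsClosedOn Sg q) {T : Set (Perm α)}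
    (hT : IsTranspositionSet T) (hSg : ∀ σ ∈ Sg, ∀ t ∈ T, σ * t ∈ Sg) :
    ∃ u : Perm α → ℤˣ, ∀ σ ∈ Sg, ∀ t ∈ T, u σ * u (σ * t) = q s(σ, σ * t) := by
  classical
  have hcancel (σ : Perm α) {t : Perm α} (ht : t ∈ T) : σ * t * t = σ := by
    rw [mul_assoc, hT.mul_self ht, mul_one]
  have hiff (σ : Perm α) {t : Perm α} (ht : t ∈ T) : σ * t ∈ Sg ↔ σ ∈ Sg :=
    ⟨fun h ↦ hcancel σ ht ▸ hSg _ h t ht, fun h ↦ hSg σ h t ht⟩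
  have hflat : IsFlat T fun σ t ↦ if σ ∈ Sg then q s(σ, σ * t) else 1 := by
    refine ⟨fun σ t ht ↦ ?_, fun σ s hs t ht ↦ ?_⟩
    · simp only [hiff σ ht, hcancel σ ht, Sym2.eq_swap (a := σ * t) (b := σ)]
      split_ifs
      · exact Int.units_mul_self _
      · exact mul_one 1
    · have hst := hT.conj_mem hs ht
      simp only [hiff σ hs, hiff σ hst]
      split_ifs with hσ
      · have hσs := hSg σ hσ s hs
        have h := hq (hT.isSwap hs) (hT.isSwap ht) hσ hσs (hSg _ hσs t ht)
          (hSg σ hσ _ hst)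
        have hend : σ * (s * t * s⁻¹) * s = σ * s * t := by group
        rw [holonomy, mul_eq_one_iff_eq_inv, Int.units_inv_eq_self] at h
        rw [h, hend, Sym2.eq_swap (b := σ), Sym2.eq_swap (a := σ * s * t), mul_comm]
      · rfl
  obtain ⟨u, hu⟩ := hflat.exists_potential hT
  refine ⟨u, fun σ hσ t ht ↦ ?_⟩
  rw [hu σ t ht, if_pos hσ, ← mul_assoc, Int.units_mul_self, one_mul]

/-- If the edges not labelled by `T` join the two sheets `L` and `Lᶜ` by left multiplication with
`τ`, a potential along `T` on `Lᶜ` is transported to `L` along these edges. -/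
lemma exists_potential_of_sheets [Finite α] (hq : IsClosedOn Sg q) {T : Set (Perm α)}
    (hT : IsTranspositionSet T) (hSg : ∀ σ ∈ Sg, ∀ t ∈ T, σ * t ∈ Sg) {τ : Perm α}
    (hτ : τ.IsSwap) (hτSg : ∀ σ ∈ Sg, τ * σ ∈ Sg) {L : Set (Perm α)}
    (hL : ∀ σ, ∀ t ∈ T, σ * t ∈ L ↔ σ ∈ L)
    (hedge : ∀ σ ∈ Sg, ∀ t : Perm α, t.IsSwap → σ * t ∈ Sg →
      t ∈ T ∨ σ * t = τ * σ ∧ (σ * t ∈ L ↔ σ ∉ L)) :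
    ∃ v : Perm α → ℤˣ, ∀ σ ∈ Sg, ∀ t : Perm α, t.IsSwap → σ * t ∈ Sg →
      v σ * v (σ * t) = q s(σ, σ * t) := by
  classical
  obtain ⟨u, hu⟩ := hq.exists_potential hT hSg
  refine ⟨fun σ ↦ if σ ∈ L then q s(σ, τ * σ) * u (τ * σ) else u σ, fun σ hσ t ht hσt ↦ ?_⟩
  rcases hedge σ hσ t ht hσt with htT | ⟨hτσ, hsheet⟩
  · simp only [hL σ t htT]
    split_ifs
    · have hback : σ * t * t = σ := by rw [mul_assoc, hT.mul_self htT, mul_one]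
      have hcross : σ * (σ⁻¹ * τ * σ) = τ * σ := by group
      have hcross' : σ * t * (t * (σ⁻¹ * τ * σ) * t⁻¹) = τ * σ * t := by
        calc _ = σ * t * t * (σ⁻¹ * τ * σ) * t⁻¹ := by group
          _ = _ := by rw [hback, hcross, hT.inv_eq htT]
      have hτσ := hτSg σ hσ
      have hρ : (σ⁻¹ * τ * σ).IsSwap := by simpa only [inv_inv] using isSwap_conj σ⁻¹ hτ
      have h := hq (σ := σ * t) ht hρ hσt (by rwa [hback])
        (by rwa [hback, hcross]) (by rw [hcross']; exact hSg _ hτσ t htT)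
      rw [hback, hcross, hcross', holonomy, ← hu _ hτσ t htT, Sym2.eq_swap (b := σ * t),
        Sym2.eq_swap (b := σ)] at h
      rw [← mul_assoc τ, ← Int.units_inv_eq_self (q s(σ, σ * t)), ← mul_eq_one_iff_eq_inv, ← h]
      ac_rfl
    · exact hu σ hσ t htT
  · have hττ : τ * (τ * σ) = σ := by rw [← mul_assoc, isSwap_mul_self hτ, one_mul]
    rw [hτσ] at hsheet ⊢
    by_cases hσL : σ ∈ L
    · simp only [hsheet, hσL, not_true_eq_false, if_true, if_false, mul_assoc,
        Int.units_mul_self, mul_one]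
    · simp only [hsheet, hσL, not_false_eq_true, if_true, if_false, hττ, mul_left_comm (u σ),
        Int.units_mul_self, mul_one, Sym2.eq_swap (b := σ)]

end IsClosedOn

end Closed

namespace GridRect

open Equiv

variable {N : ℕ}

/-- The unordered pair of the endpoint generators. -/
def edge (r : GridRect N) : Sym2 (Perm (Fin N)) := s(r.perm, r.endPerm)

/-- The rectangles both of whose endpoint generators lie in `Sg`. -/
def rectSet (Sg : Set (Perm (Fin N))) : Set (GridRect N) := {r | r.perm ∈ Sg ∧ r.endPerm ∈ Sg}

lemma endPerm_ne_of_colSwap_ne {r₁ r₂ : GridRect N} (h : r₂.perm = r₁.endPerm)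
    (hne : r₁.colSwap ≠ r₂.colSwap) : r₂.endPerm ≠ r₁.perm := by
  rw [endPerm_eq, h, endPerm_eq, mul_assoc, ne_eq, mul_eq_left, mul_eq_one_iff_eq_inv]
  exact fun heq ↦ hne (heq.trans (swap_inv _ _))

lemma endPerm_sameRect (r : GridRect N) : (sameRect r).endPerm = r.perm := by
  rw [endPerm_eq, sameRect, endPerm_eq, mul_assoc]
  exact (congrArg _ r.colSwap_mul_self).trans (mul_one _)

lemma endPerm_revRect (r : GridRect N) : (revRect r).endPerm = r.perm := by
  rw [← r.endPerm_sameRect, endPerm_eq, endPerm_eq]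
  exact congrArg _ (swap_comm _ _)

lemma eq_or_eq_revRect_sameRect {r r' : GridRect N} (hperm : r'.perm = r.perm)
    (hend : r'.endPerm = r.endPerm) : r' = r ∨ r' = revRect (sameRect r) := by
  rw [endPerm_eq, endPerm_eq, hperm] at hend
  exact (eq_or_eq_of_swap_eq_swap r'.hij (mul_left_cancel hend)).imp (fun h ↦ ext hperm h.1 h.2)
    fun h ↦ ext (hperm.trans r.endPerm_sameRect.symm) h.1 h.2

lemma eq_of_edge_eq {r r' : GridRect N} (h : r'.edge = r.edge) :
    r' = r ∨ r' = revRect (sameRect r) ∨ r' = sameRect r ∨ r' = revRect r := by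
  rcases Sym2.eq_iff.1 h with ⟨hperm, hend⟩ | ⟨hperm, hend⟩
  · exact (eq_or_eq_revRect_sameRect hperm hend).imp_right .inl
  · refine .inr (.inr ((eq_or_eq_revRect_sameRect hperm
      (hend.trans r.endPerm_sameRect.symm)).imp_right fun h ↦ h.trans ?_))
    exact ext (sameRect r).endPerm_sameRect rfl rfl

end GridRect

namespace IsSignAssignment

open Equiv GridRect

variable {N : ℕ} {R : Set (GridRect N)} {Sg : Set (Perm (Fin N))} {S S' : GridRect N → ℤ}

lemma ne_zero (hS : IsSignAssignment R S) {r : GridRect N} (hr : r ∈ R) : S r ≠ 0 := by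
  rcases hS.1 r hr with h | h <;> rw [h] <;> decide

lemma eq_of_edge_eq (hS : IsSignAssignment (rectSet Sg) S)
    (hS' : IsSignAssignment (rectSet Sg) S') {r r' : GridRect N} (hr : r ∈ rectSet Sg)
    (h : r'.edge = r.edge) (heq : S' r = S r) : S' r' = S r' := by
  have hsame_mem : sameRect r ∈ rectSet Sg := ⟨hr.2, by rw [endPerm_sameRect]; exact hr.1⟩
  have hsame : S' (sameRect r) = S (sameRect r) := mul_left_cancel₀ (hS.ne_zero hr) <| by
    rw [hS.2.2.1 r hr hsame_mem, ← heq, hS'.2.2.1 r hr hsame_mem]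
  have hrev {ρ : GridRect N} (hρ : ρ ∈ rectSet Sg) (heq : S' ρ = S ρ) :
      S' (revRect ρ) = S (revRect ρ) := mul_left_cancel₀ (hS.ne_zero hρ) <| by
    have hrev_mem : revRect ρ ∈ rectSet Sg := ⟨hρ.2, by rw [endPerm_revRect]; exact hρ.1⟩
    rw [hS.2.1 ρ hρ hrev_mem, ← heq, hS'.2.1 ρ hρ hrev_mem]
  rcases GridRect.eq_of_edge_eq h with rfl | rfl | rfl | rfl
  exacts [heq, hrev hsame_mem hsame, hsame, hrev hr heq]

end IsSignAssignment

section Ratio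

open Equiv GridRect

variable {N : ℕ} {Sg : Set (Perm (Fin N))} {S S' : GridRect N → ℤ}

/-- The ratio of two sign assignments on `R`, as a function of the pair of endpoints of a
rectangle: the value of this ratio is the same for all rectangles with these endpoints. -/
noncomputable def edgeRatio (R : Set (GridRect N)) (S S' : GridRect N → ℤ)
    (e : Sym2 (Perm (Fin N))) : ℤˣ :=
  open Classical in if ∃ r ∈ R, r.edge = e ∧ S' r ≠ S r then -1 else 1

lemma edgeRatio_mul (hS : IsSignAssignment (rectSet Sg) S)
    (hS' : IsSignAssignment (rectSet Sg) S') {r : GridRect N} (hr : r ∈ rectSet Sg) :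
    edgeRatio (rectSet Sg) S S' r.edge * S r = S' r := by
  by_cases heq : S' r = S r
  · rw [edgeRatio, if_neg, Units.val_one, one_mul, heq]
    rintro ⟨r', -, h, hne⟩
    exact hne (hS.eq_of_edge_eq hS' hr h heq)
  · rw [edgeRatio, if_pos ⟨r, hr, rfl, heq⟩, Units.val_neg, Units.val_one]
    have h := hS.1 r hr
    have h' := hS'.1 r hr
    omega

lemma holonomy_edgeRatio_of_isSquareOf (hS : IsSignAssignment (rectSet Sg) S)
    (hS' : IsSignAssignment (rectSet Sg) S') {r₁ r₂ r₃ r₄ : GridRect N}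
    (h : IsSquareOf r₁ r₂ r₃ r₄) (h₁ : r₁.perm ∈ Sg) (h₁' : r₁.endPerm ∈ Sg)
    (h₂' : r₂.endPerm ∈ Sg) (h₃' : r₃.endPerm ∈ Sg) :
    holonomy (edgeRatio (rectSet Sg) S S') r₁.perm r₁.endPerm r₂.endPerm r₃.endPerm = 1 := by
  have m₁ : r₁ ∈ rectSet Sg := ⟨h₁, h₁'⟩
  have m₂ : r₂ ∈ rectSet Sg := ⟨h.2.2.1 ▸ h₁', h₂'⟩
  have m₃ : r₃ ∈ rectSet Sg := ⟨h.2.1 ▸ h₁, h₃'⟩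
  have m₄ : r₄ ∈ rectSet Sg := ⟨h.2.2.2.1 ▸ h₃', h.2.2.2.2.1 ▸ h₂'⟩
  let q (r : GridRect N) : ℤ := edgeRatio (rectSet Sg) S S' r.edge
  have hfactor : q r₁ * q r₂ * (q r₃ * q r₄) * (S r₁ * S r₂ * S r₃ * S r₄) =
      S' r₁ * S' r₂ * S' r₃ * S' r₄ := by
    rw [← edgeRatio_mul hS hS' m₁, ← edgeRatio_mul hS hS' m₂, ← edgeRatio_mul hS hS' m₃,
      ← edgeRatio_mul hS hS' m₄]
    ring
  rw [hS.2.2.2 _ _ _ _ h m₁ m₂ m₃ m₄, hS'.2.2.2 _ _ _ _ h m₁ m₂ m₃ m₄] at hfactor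
  have hprod : q r₁ * q r₂ * (q r₃ * q r₄) = 1 := by omega
  obtain ⟨-, hperm₃, hperm₂, hperm₄, hend₄, -, -⟩ := h
  simp only [q, edge, hperm₃, hperm₂, hperm₄, hend₄] at hprod
  rw [holonomy, Sym2.eq_swap (a := r₂.endPerm), Sym2.eq_swap (b := r₁.perm),
    mul_comm (edgeRatio _ _ _ s(r₃.endPerm, _))]
  exact Units.ext hprod

lemma isSquareOf_of_apply_eq (σ : Perm (Fin N)) {i j k l : Fin N} (hij : i ≠ j) (hkl : k ≠ l)
    (hi : swap k l i = i) (hj : swap k l j = j) :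
    IsSquareOf ⟨σ, i, j, hij⟩ ⟨σ * swap i j, k, l, hkl⟩ ⟨σ, k, l, hkl⟩
      ⟨σ * swap k l, i, j, hij⟩ := by
  have hne : swap i j ≠ swap k l := fun h ↦ hij (by rw [← hi, ← h, swap_apply_left])
  obtain ⟨hik, hil⟩ := ne_sides_of_colSwap_apply_eq (r := ⟨σ, k, l, hkl⟩) hi
  obtain ⟨hjk, hjl⟩ := ne_sides_of_colSwap_apply_eq (r := ⟨σ, k, l, hkl⟩) hj
  have hcomm := mul_swap_eq_swap_mul_of_apply_eq hi hj
  refine ⟨fun h ↦ ?_, rfl, rfl, rfl, ?_, endPerm_ne_of_colSwap_ne rfl hne, fun p ↦ ?_⟩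
  · exact hne (congrArg (fun r ↦ r.1.colSwap) h)
  · exact (mul_assoc σ _ _).trans ((congrArg (σ * ·) hcomm).trans (mul_assoc σ _ _).symm)
  · simp only [dom, Perm.mul_apply, hi, hj, swap_apply_of_ne_of_ne hik.symm hjk.symm,
      swap_apply_of_ne_of_ne hil.symm hjl.symm, add_comm]

lemma isSquareOf_of_cyclic (σ : Perm (Fin N)) {a b c : Fin N} (hab : a ≠ b) (hac : a ≠ c)
    (hbc : b ≠ c) (hcol : b - a < c - a) (hrow : σ b - σ a < σ c - σ a) :
    IsSquareOf ⟨σ, a, b, hab⟩ ⟨σ * swap a b, a, c, hac⟩ ⟨σ, b, c, hbc⟩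
      ⟨σ * swap b c, a, b, hab⟩ := by
  have hend : σ * swap b c * swap a b = σ * swap a b * swap a c := by
    rw [mul_assoc, mul_assoc, swap_mul_swap_eq_swap_mul_swap hac hbc]
  have hne : swap a b ≠ swap a c := fun h ↦ hbc <| by
    rw [← swap_apply_left a b, h, swap_apply_left]
  refine ⟨fun h ↦ ?_, rfl, rfl, rfl, hend, endPerm_ne_of_colSwap_ne rfl hne, fun p ↦ ?_⟩
  · exact hab (congrArg (fun r ↦ r.1.i) h)
  · zify
    simp only [dom_eq, Perm.mul_apply, swap_apply_left,
      swap_apply_of_ne_of_ne hac.symm hbc.symm, swap_apply_of_ne_of_ne hab hac]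
    rw [← cycInd_add_cycInd hcol, ← cycInd_add_cycInd hrow]
    ring

lemma holonomy_edgeRatio_of_col_cyclic (hS : IsSignAssignment (rectSet Sg) S)
    (hS' : IsSignAssignment (rectSet Sg) S') {σ : Perm (Fin N)} {a b c : Fin N} (hab : a ≠ b)
    (hac : a ≠ c) (hbc : b ≠ c) (hcol : b - a < c - a) (h₁ : σ ∈ Sg) (h₂ : σ * swap a b ∈ Sg)
    (h₃ : σ * swap a b * swap a c ∈ Sg) (h₄ : σ * swap b c ∈ Sg) :
    holonomy (edgeRatio (rectSet Sg) S S') σ (σ * swap a b) (σ * swap a b * swap a c)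
      (σ * swap b c) = 1 := by
  rcases cyclic_or_cyclic_swap_right (σ.injective.ne hbc) (σ a) with hrow | hrow
  · exact holonomy_edgeRatio_of_isSquareOf hS hS' (isSquareOf_of_cyclic σ hab hac hbc hcol hrow)
      h₁ h₂ h₃ h₄
  · have hend : σ * swap a b * swap a c = σ * swap b c * swap a b := by
      rw [mul_assoc, mul_assoc, swap_mul_swap_eq_swap_mul_swap hac hbc]
    have hend' : σ * swap b c * swap a b * swap a c = σ * swap a b := by
      rw [← hend, mul_swap_mul_self]
    have hloop : σ * swap b c * swap b c = σ := mul_swap_mul_self _ _ _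
    have hsq := isSquareOf_of_cyclic (σ * swap b c) hab hac hbc hcol <| by
      simpa only [Perm.mul_apply, swap_apply_left, swap_apply_right,
        swap_apply_of_ne_of_ne hab hac] using hrow
    have h := holonomy_edgeRatio_of_isSquareOf hS hS' hsq h₄
      (show σ * swap b c * swap a b ∈ Sg from hend ▸ h₃)
      (show σ * swap b c * swap a b * swap a c ∈ Sg from hend' ▸ h₂)
      (show σ * swap b c * swap b c ∈ Sg from hloop.symm ▸ h₁)
    simp only [endPerm, ← Perm.mul_def] at h
    rwa [hend', hloop, ← hend, holonomy_reverse] at h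

/-- Which vertex of the 4-cycle is the source of a square of rectangles depends on the cyclic orders
of the columns and of the rows. -/
lemma holonomy_edgeRatio_of_ne (hS : IsSignAssignment (rectSet Sg) S)
    (hS' : IsSignAssignment (rectSet Sg) S') {σ : Perm (Fin N)} {a b c : Fin N} (hab : a ≠ b)
    (hac : a ≠ c) (hbc : b ≠ c) (h₁ : σ ∈ Sg) (h₂ : σ * swap a b ∈ Sg)
    (h₃ : σ * swap a b * swap a c ∈ Sg) (h₄ : σ * swap b c ∈ Sg) :
    holonomy (edgeRatio (rectSet Sg) S S') σ (σ * swap a b) (σ * swap a b * swap a c)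
      (σ * swap b c) = 1 := by
  rcases cyclic_or_cyclic_swap_left hac hbc with hcol | hcol
  · exact holonomy_edgeRatio_of_col_cyclic hS hS' hab hac hbc hcol h₁ h₂ h₃ h₄
  · have hloop : σ * swap a b * swap b a = σ := by rw [swap_comm b a, mul_swap_mul_self]
    have h := holonomy_edgeRatio_of_col_cyclic hS hS' (σ := σ * swap a b) hab.symm hbc hac hcol
      h₂ (by rwa [hloop]) (by rwa [hloop]) h₃
    rwa [hloop, holonomy_swap_swap] at h

lemma isClosedOn_edgeRatio (hS : IsSignAssignment (rectSet Sg) S)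
    (hS' : IsSignAssignment (rectSet Sg) S') :
    IsClosedOn Sg (edgeRatio (rectSet Sg) S S') := by
  intro σ s t hs ht h₁ h₂ h₃ h₄
  rcases eq_or_ne s t with rfl | hst
  · rw [mul_inv_cancel_right, mul_assoc, isSwap_mul_self hs, mul_one, holonomy_self]
  rcases exists_swap_swap_or_apply_eq hs ht hst with
    ⟨a, b, c, hab, hac, hbc, rfl, rfl⟩ | ⟨i, j, hij, rfl, hi, hj⟩
  · rw [← swap_apply_apply, swap_apply_left, swap_apply_of_ne_of_ne hac.symm hbc.symm] at h₄ ⊢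
    exact holonomy_edgeRatio_of_ne hS hS' hab hac hbc h₁ h₂ h₃ h₄
  · obtain ⟨k, l, hkl, rfl⟩ := ht
    have hconj : swap i j * swap k l * (swap i j)⁻¹ = swap k l := by
      rw [mul_inv_eq_iff_eq_mul, mul_swap_eq_swap_mul_of_apply_eq hi hj]
    rw [hconj] at h₄ ⊢
    exact holonomy_edgeRatio_of_isSquareOf hS hS' (isSquareOf_of_apply_eq σ hij hkl hi hj)
      h₁ h₂ h₃ h₄

end Ratio

section GenSet

open Equiv

/-- The transpositions preserving `s`, or equivalently exchanging two points on the same side of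
the partition into `s` and `sᶜ`. -/
def blockSwaps {α : Type*} [DecidableEq α] (s : Set α) : Set (Perm α) :=
  {t | t.IsSwap ∧ ∀ x, t x ∈ s ↔ x ∈ s}

lemma isTranspositionSet_blockSwaps {α : Type*} [DecidableEq α] (s : Set α) :
    IsTranspositionSet (blockSwaps s) where
  isSwap ht := ht.1
  conj_mem {t₁ t₂} h₁ h₂ := ⟨isSwap_conj t₁ h₂.1, fun x ↦ by
    rw [Perm.mul_apply, Perm.mul_apply, h₁.2, h₂.2, ← h₁.2 (t₁⁻¹ x), Perm.inv_def,
      apply_symm_apply]⟩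

lemma swap_mem_blockSwaps {α : Type*} [DecidableEq α] {s : Set α} {i j : α} (hij : i ≠ j)
    (h : i ∈ s ↔ j ∈ s) : swap i j ∈ blockSwaps s := by
  refine ⟨⟨i, j, hij, rfl⟩, fun x ↦ ?_⟩
  rw [swap_apply_def]
  split_ifs with hi hj
  · rw [hi, h]
  · rw [hj, h]
  · rfl

variable {m n : ℕ} {σ t : Perm (Fin (m + n))} {a b : Fin (m + n)}

lemma mul_mem_GenSet (hσ : σ ∈ GenSet m n) (ht : t ∈ blockSwaps {j : Fin (m + n) | (j : ℕ) < m}) :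
    σ * t ∈ GenSet m n := fun j ↦
  ⟨fun hj ↦ (hσ (t j)).1 ((ht.2 j).2 hj),
    fun hj ↦ (hσ (t j)).2 (not_lt.1 (mt (ht.2 j).1 (not_lt.2 hj)))⟩

lemma swap_mul_mem_GenSet (ha : (a : ℕ) + 1 = m) (hb : (b : ℕ) = m) (hσ : σ ∈ GenSet m n) :
    swap a b * σ ∈ GenSet m n := by
  intro j
  have hj := hσ j
  rw [Perm.mul_apply, swap_apply_def]
  split_ifs <;> omega

lemma swap_apply_eq_of_mul_swap_mem_GenSet (ha : (a : ℕ) + 1 = m) (hb : (b : ℕ) = m)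
    (hσ : σ ∈ GenSet m n) {i j : Fin (m + n)} (hi : (i : ℕ) < m) (hj : m ≤ j)
    (hσt : σ * swap i j ∈ GenSet m n) : σ i = a ∧ σ j = b ∨ σ i = b ∧ σ j = a := by
  have hne : (σ i : ℕ) ≠ σ j := fun h ↦ by
    have := congrArg Fin.val (σ.injective (Fin.ext h))
    omega
  have hi₁ := (hσ i).1 hi
  have hj₁ := (hσ j).2 hj
  have hi₂ := (hσt i).1 hi
  have hj₂ := (hσt j).2 hj
  simp only [Perm.mul_apply, swap_apply_left, swap_apply_right] at hi₂ hj₂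
  simp only [Fin.ext_iff]
  omega

lemma mem_blockSwaps_or_mul_eq_swap_mul (ha : (a : ℕ) + 1 = m) (hb : (b : ℕ) = m)
    (hσ : σ ∈ GenSet m n) (ht : t.IsSwap) (hσt : σ * t ∈ GenSet m n) :
    t ∈ blockSwaps {j : Fin (m + n) | (j : ℕ) < m} ∨
      σ * t = swap a b * σ ∧ (((σ * t)⁻¹ b : ℕ) < m ↔ ¬ (σ⁻¹ b : ℕ) < m) := by
  suffices h : ∀ i j : Fin (m + n), (i : ℕ) < m → m ≤ j → σ * swap i j ∈ GenSet m n →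
      σ * swap i j = swap a b * σ ∧ (((σ * swap i j)⁻¹ b : ℕ) < m ↔ ¬ (σ⁻¹ b : ℕ) < m) by
    obtain ⟨i, j, hij, rfl⟩ := ht
    rcases lt_or_ge (i : ℕ) m with hi | hi <;> rcases lt_or_ge (j : ℕ) m with hj | hj
    · exact .inl (swap_mem_blockSwaps hij (by simp only [Set.mem_ofPred_eq, hi, hj]))
    · exact .inr (h i j hi hj hσt)
    · rw [swap_comm] at hσt ⊢
      exact .inr (h j i hj hi hσt)
    · exact .inl (swap_mem_blockSwaps hij (by simp only [Set.mem_ofPred_eq, hi.not_gt, hj.not_gt]))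
  intro i j hi hj hσt
  have hab := swap_apply_eq_of_mul_swap_mem_GenSet ha hb hσ hi hj hσt
  refine ⟨?_, ?_⟩
  · rw [mul_swap_eq_swap_mul]
    rcases hab with ⟨rfl, rfl⟩ | ⟨rfl, rfl⟩
    · rfl
    · rw [swap_comm]
  · rcases hab with ⟨-, rfl⟩ | ⟨rfl, -⟩ <;>
      simp only [mul_inv_rev, Perm.mul_apply, Perm.inv_def, symm_apply_apply, symm_swap,
        swap_apply_left, swap_apply_right] <;> omega

lemma IsClosedOn.exists_potential_GenSet {q : Sym2 (Perm (Fin (m + n))) → ℤˣ}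
    (hq : IsClosedOn (GenSet m n) q) (hm : 1 ≤ m) (hn : 1 ≤ n) :
    ∃ v : Perm (Fin (m + n)) → ℤˣ, ∀ σ ∈ GenSet m n, ∀ t : Perm (Fin (m + n)), t.IsSwap →
      σ * t ∈ GenSet m n → v σ * v (σ * t) = q s(σ, σ * t) := by
  obtain ⟨a, ha⟩ : ∃ a : Fin (m + n), (a : ℕ) + 1 = m := ⟨⟨m - 1, by omega⟩, by simp only; omega⟩
  obtain ⟨b, hb⟩ : ∃ b : Fin (m + n), (b : ℕ) = m := ⟨⟨m, by omega⟩, rfl⟩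
  have hab : a ≠ b := fun h ↦ by rw [h] at ha; omega
  have hT := isTranspositionSet_blockSwaps {j : Fin (m + n) | (j : ℕ) < m}
  refine hq.exists_potential_of_sheets (L := {σ | (σ⁻¹ b : ℕ) < m}) hT
    (fun σ hσ t ht ↦ mul_mem_GenSet hσ ht) ⟨a, b, hab, rfl⟩
    (fun σ hσ ↦ swap_mul_mem_GenSet ha hb hσ) (fun σ t ht ↦ ?_)
    (fun σ hσ t ht hσt ↦ mem_blockSwaps_or_mul_eq_swap_mul ha hb hσ ht hσt)
  simpa only [Set.mem_ofPred_eq, mul_inv_rev, Perm.mul_apply, hT.inv_eq ht] using ht.2 (σ⁻¹ b)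

lemma IsSignAssignment.gaugeEquiv_FSet {S S' : GridRect (m + n) → ℤ}
    (hS : IsSignAssignment (FSet m n) S) (hS' : IsSignAssignment (FSet m n) S') (hm : 1 ≤ m)
    (hn : 1 ≤ n) : GaugeEquiv (FSet m n) S S' := by
  obtain ⟨v, hv⟩ := (isClosedOn_edgeRatio hS hS').exists_potential_GenSet hm hn
  refine ⟨fun σ ↦ v σ, fun σ ↦ Int.isUnit_iff.1 (v σ).isUnit, fun r hr ↦ ?_⟩
  have hratio : v r.perm * v r.endPerm = edgeRatio (FSet m n) S S' r.edge :=
    hv r.perm hr.1 r.colSwap r.isSwap_colSwap hr.2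
  calc S' r = edgeRatio (FSet m n) S S' r.edge * S r := (edgeRatio_mul hS hS' hr).symm
    _ = v r.perm * S r * v r.endPerm := by
      rw [← hratio, Units.val_mul]
      ring

end GenSet

/-- There exists a sign assignment on `F'`, and any two sign assignments on `F'` are
gauge equivalent. -/
theorem sign_assignment_exists_unique_on_FSet (m n : ℕ) (hm : 1 ≤ m) (hn : 1 ≤ n) :
    (∃ S : GridRect (m + n) → ℤ, IsSignAssignment (FSet m n) S) ∧
    (∀ S S' : GridRect (m + n) → ℤ, IsSignAssignment (FSet m n) S →
      IsSignAssignment (FSet m n) S' → GaugeEquiv (FSet m n) S S') := by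
  obtain ⟨Λ⟩ : Nonempty (SpinLift (Fin (m + n))) := inferInstance
  exact ⟨⟨Λ.rectSign, Λ.isSignAssignment_rectSign _⟩, fun _ _ hS hS' ↦ hS.gaugeEquiv_FSet hS' hm hn⟩
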